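/- Let → be a type-invariant transition relation over a finite state set Q with initial states I ⊆ Q and final states F ⊆ Q. There exists an accepting run, i.e. an infinite run whose first configuration has a state in I and in which some state f ∈ F occurs in infinitely many configurations, if and only if there exist finite runs r₁ and r₂ such that r₁ starts in a configuration with state in I and ends in some configuration c whose state lies in F, and r₂ is a stretching loop starting in c. -/

import Mathlib

/-!
From right to left, a stretching loop is pumped by a single map of words. If `w ≼* v`, then the
induced isomorphism of maximal common ancestor trees extends to a map `φ` from *all* words to
words which fixes the constants and preserves the root `ε`, longest common prefixes and the strict
lexicographic order. Such a map preserves the type of every tuple, hence by type invariance it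
sends runs to runs. As `φ` sends the start of the loop to its end, the loop `r` followed by `φ(r)`,
`φ²(r)`, … is an infinite run.

The extension `φ` is built letter by letter: `φ(a w) = f(a) t_a φ_a(w)`, where `f` is a strictly
increasing function on `ℚ` interpolating the finitely many prescribed first letters and `φ_a` is
obtained by induction for the subtree of words starting with `a`. The stretching condition
guarantees that a branch of the source tree is never longer than its image, so it can be mapped
letter by letter; the excess length of the image is absorbed by the words `t_a`, which are empty
unless the one-letter word `a` is a node.

From left to right, a type is determined by finitely many truth values and `≼*` between tuples of
equal type compares finitely many natural numbers, the gaps between nodes. The pigeonhole principle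
and Dickson's lemma yield two positions `i < j` with the given final state whose configurations are
related by `≼*`.
-/

namespace CLTL

/-- A word is a finite sequence of rationals. -/
abbrev Word := List ℚ

/-- Lexicographic order on lists over a linear order: `w ⊑ v` iff `w` is a prefix of `v`,
or they branch at some position with the letter of `w` smaller. -/
def lexLe {α : Type*} [LinearOrder α] (w v : List α) : Prop :=
  w <+: v ∨ ∃ (p : List α) (a b : α), a < b ∧ (p ++ [a]) <+: w ∧ (p ++ [b]) <+: v

/-- Longest common prefix of two lists. -/
def lcp {α : Type*} [DecidableEq α] : List α → List α → List α
  | a :: w, b :: v => if a = b then a :: lcp w v else []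
  | _, _ => []

/-- Iterated longest common prefix of a nonempty list of words. -/
def listLCP : List Word → Word
  | [] => []
  | [x] => x
  | x :: xs => lcp x (listLCP xs)

/-- Insertion of an `m`-gap at `u`. -/
def iota (u : Word) (m : ℕ) (w : Word) : Word :=
  if u <+: w then u ++ List.replicate m 0 ++ w.drop u.length else w

/-- The maximal common ancestor tree of a tuple `w` together with constants `C`:
`{ε}` together with all iterated longest common prefixes of nonempty subsets of entries. -/
def MCAT (C : List Word) {k : ℕ} (w : Fin k → Word) : Set Word :=
  insert [] { x | ∃ I : Finset (Fin (k + C.length)),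
    I.Nonempty ∧ x = listLCP (I.toList.map (Fin.append w C.get)) }

/-- `h` is the induced isomorphism witnessing `typ_C(w) = typ_C(v)`. -/
def IsInducedIso (C : List Word) {k : ℕ} (w v : Fin k → Word) (h : Word → Word) : Prop :=
  Set.BijOn h (MCAT C w) (MCAT C v) ∧
  (∀ x ∈ MCAT C w, ∀ y ∈ MCAT C w,
    (x <+: y ↔ h x <+: h y) ∧ (lexLe x y ↔ lexLe (h x) (h y))) ∧
  (∀ c ∈ C, h c = c) ∧
  (∀ i : Fin k, h (w i) = v i)

/-- `typ_C(w) = typ_C(v)`. -/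
def SameTyp (C : List Word) {k : ℕ} (w v : Fin k → Word) : Prop :=
  ∃ h : Word → Word, IsInducedIso C w v h

/-- The stretching condition on an isomorphism `h` of `MCAT_C(w)`:
`|h e| - |h d| ≥ |e| - |d|` whenever `d` is a proper prefix of `e`. -/
def StretchCond (C : List Word) {k : ℕ} (w : Fin k → Word) (h : Word → Word) : Prop :=
  ∀ d ∈ MCAT C w, ∀ e ∈ MCAT C w, d <+: e → d ≠ e →
    e.length + (h d).length ≤ (h e).length + d.length

/-- `w ≼* v` for tuples of words. -/
def Stretch (C : List Word) {k : ℕ} (w v : Fin k → Word) : Prop :=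
  ∃ h : Word → Word, IsInducedIso C w v h ∧ StretchCond C w h

/-- `≼*` on configurations. -/
def ConfigLe (C : List Word) {Q : Type*} {n : ℕ}
    (c d : Q × (Fin n → Word)) : Prop :=
  c.1 = d.1 ∧ Stretch C c.2 d.2

/-- A transition relation is type-invariant. -/
def TypeInvariant (C : List Word) {Q : Type*} {n : ℕ}
    (step : (Q × (Fin n → Word)) → (Q × (Fin n → Word)) → Prop) : Prop :=
  ∀ (q p : Q) (w v w' v' : Fin n → Word),
    step (q, w) (p, v) → SameTyp C (Fin.append w v) (Fin.append w' v') →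
      step (q, w') (p, v')

/-- Finite runs, indexed by `Fin (N+1)`. -/
def IsFinRun {Q : Type*} {n : ℕ}
    (step : (Q × (Fin n → Word)) → (Q × (Fin n → Word)) → Prop)
    {N : ℕ} (r : Fin (N + 1) → Q × (Fin n → Word)) : Prop :=
  ∀ i : Fin N, step (r i.castSucc) (r i.succ)

/-- Infinite runs. -/
def IsInfRun {Q : Type*} {n : ℕ}
    (step : (Q × (Fin n → Word)) → (Q × (Fin n → Word)) → Prop)
    (r : ℕ → Q × (Fin n → Word)) : Prop :=
  ∀ i : ℕ, step (r i) (r (i + 1))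

/-- The pair `(w, v)` (of tuples of equal type) is contracting. -/
def ContractingPair (C : List Word) {k : ℕ} (w v : Fin k → Word) : Prop :=
  ∃ h : Word → Word, IsInducedIso C w v h ∧
    ((∃ d ∈ MCAT C w, h d <+: d ∧ h d ≠ d) ∨
     (∃ d ∈ MCAT C w, ∃ e ∈ MCAT C w,
        d <+: e ∧ d ≠ e ∧ h e = e ∧ d <+: h d ∧ d ≠ h d))

/-- A set of words `T` has `n`-gaps above `B`. -/
def HasGaps (n : ℕ) (T B : Set Word) : Prop :=
  ∀ d ∈ T, ∀ e ∈ T, d <+: e → d ≠ e → (∀ b ∈ B, ¬ e <+: b) → n + d.length < e.length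

section LongestCommonPrefix

variable {α : Type*} [DecidableEq α] {p w v : List α}

@[simp] theorem nil_lcp (w : List α) : lcp [] w = [] := rfl

@[simp] theorem lcp_nil (w : List α) : lcp w [] = [] := by
  cases w <;> rfl

@[simp] theorem lcp_cons_cons_self (a : α) (w v : List α) :
    lcp (a :: w) (a :: v) = a :: lcp w v :=
  if_pos rfl

theorem lcp_cons_cons_of_ne {a b : α} (hab : a ≠ b) (w v : List α) :
    lcp (a :: w) (b :: v) = [] :=
  if_neg hab

@[simp] theorem lcp_append_append (t w v : List α) : lcp (t ++ w) (t ++ v) = t ++ lcp w v := by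
  induction t with
  | nil => rfl
  | cons a t ih => rw [List.cons_append, List.cons_append, lcp_cons_cons_self, ih, List.cons_append]

theorem prefix_lcp_iff : p <+: lcp w v ↔ p <+: w ∧ p <+: v := by
  induction p generalizing w v with
  | nil => simp only [List.nil_prefix, and_self]
  | cons c p ih =>
    rcases w with _ | ⟨a, w⟩
    · simp
    rcases v with _ | ⟨b, v⟩
    · simp
    by_cases hab : a = b
    · subst hab
      simp only [lcp_cons_cons_self, List.cons_prefix_cons, ih]
      tauto
    · simp only [lcp_cons_cons_of_ne hab, List.prefix_nil, reduceCtorEq, List.cons_prefix_cons,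
        false_iff]
      rintro ⟨⟨hca, -⟩, hcb, -⟩
      exact hab (hca.symm.trans hcb)

theorem lcp_prefix_left (w v : List α) : lcp w v <+: w :=
  (prefix_lcp_iff.1 List.prefix_rfl).1

theorem lcp_prefix_right (w v : List α) : lcp w v <+: v :=
  (prefix_lcp_iff.1 List.prefix_rfl).2

theorem lcp_eq_left_iff_prefix : lcp w v = w ↔ w <+: v :=
  ⟨fun h => h ▸ lcp_prefix_right w v, fun h =>
    antisymm (r := (· <+: ·)) (lcp_prefix_left w v) (prefix_lcp_iff.2 ⟨List.prefix_rfl, h⟩)⟩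

end LongestCommonPrefix

theorem listLCP_cons (x : Word) {l : List Word} (hl : l ≠ []) :
    listLCP (x :: l) = lcp x (listLCP l) :=
  listLCP.eq_3 x l hl

theorem prefix_listLCP_iff {p : Word} {l : List Word} (hl : l ≠ []) :
    p <+: listLCP l ↔ ∀ x ∈ l, p <+: x := by
  induction l with
  | nil => contradiction
  | cons x l ih =>
    rcases eq_or_ne l [] with rfl | hl'
    · simp only [listLCP, List.mem_singleton, forall_eq]
    · rw [listLCP_cons x hl', prefix_lcp_iff, ih hl', List.forall_mem_cons]

section LexicographicOrder

variable {α : Type*} [LinearOrder α] {a b : α} {t w v : List α}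

theorem lexLe_nil_right : lexLe w [] ↔ w = [] := by
  simp [lexLe]

theorem lexLe_cons_cons : lexLe (a :: w) (b :: v) ↔ a < b ∨ a = b ∧ lexLe w v := by
  constructor
  · rintro (h | ⟨_ | ⟨e, p⟩, c, d, hcd, hw, hv⟩)
    · obtain ⟨hab, hwv⟩ := List.cons_prefix_cons.1 h
      exact Or.inr ⟨hab, Or.inl hwv⟩
    · simp only [List.nil_append, List.cons_prefix_cons, List.nil_prefix, and_true] at hw hv
      exact Or.inl (hw ▸ hv ▸ hcd)
    · simp only [List.cons_append, List.cons_prefix_cons] at hw hv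
      exact Or.inr ⟨hw.1 ▸ hv.1, Or.inr ⟨p, c, d, hcd, hw.2, hv.2⟩⟩
  · rintro (hab | ⟨rfl, h | ⟨p, c, d, hcd, hw, hv⟩⟩)
    · exact Or.inr ⟨[], a, b, hab, by simp, by simp⟩
    · exact Or.inl (List.cons_prefix_cons.2 ⟨rfl, h⟩)
    · exact Or.inr ⟨a :: p, c, d, hcd, List.cons_prefix_cons.2 ⟨rfl, hw⟩,
        List.cons_prefix_cons.2 ⟨rfl, hv⟩⟩

theorem lexLe_iff_le : lexLe w v ↔ w ≤ v := by
  induction w generalizing v with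
  | nil => exact iff_of_true (Or.inl List.nil_prefix) (not_lt.1 (List.not_lt_nil v))
  | cons a w ih =>
    cases v with
    | nil =>
      rw [lexLe_nil_right]
      exact iff_of_false (List.cons_ne_nil a w) (not_le.2 (List.nil_lt_cons a w))
    | cons b v =>
      rw [lexLe_cons_cons, ih, le_iff_lt_or_eq, le_iff_lt_or_eq, List.cons_lt_cons_iff,
        List.cons.injEq]
      tauto

theorem append_lt_append_left_iff : t ++ w < t ++ v ↔ w < v := by
  induction t with
  | nil => rfl
  | cons a t ih => rw [List.cons_append, List.cons_append, List.cons_lt_cons_self, ih]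

end LexicographicOrder

section StrictMonoExtension

open Order Order.PartialIso

variable {α β : Type*} [LinearOrder α] [Countable α] [LinearOrder β] [DenselyOrdered β]
  [NoMinOrder β] [NoMaxOrder β] [Nonempty β]

theorem exists_strictMono_eqOn {s : Set α} (hs : s.Finite) {b : α → β} (hb : StrictMonoOn b s) :
    ∃ f : α → β, StrictMono f ∧ Set.EqOn f b s := by
  cases nonempty_encodable α
  let p : PartialIso α β := ⟨hs.toFinset.image fun a => (a, b a), by
    simp only [Finset.mem_image, Set.Finite.mem_toFinset]
    rintro _ ⟨x, hx, rfl⟩ _ ⟨y, hy, rfl⟩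
    exact (hb.cmp_map_eq hx hy).symm⟩
  let J := idealOfCofinals p (definedAtLeft β)
  have hJ : ∀ {x y : α × β}, (∃ g ∈ J, x ∈ g.val) → (∃ g ∈ J, y ∈ g.val) →
      cmp x.1 y.1 = cmp x.2 y.2 := by
    rintro x y ⟨g, hg, hx⟩ ⟨g', hg', hy⟩
    obtain ⟨m, -, hgm, hgm'⟩ := J.directed g hg g' hg'
    exact m.prop x (hgm hx) y (hgm' hy)
  let F (a : α) := funOfIdeal a J (cofinal_meets_idealOfCofinals _ _ a)
  refine ⟨fun a => (F a).val, fun x y => (lt_iff_lt_of_cmp_eq_cmp (hJ (F x).2 (F y).2)).1,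
    fun a ha => ?_⟩
  have hpa : ∃ g ∈ J, (a, b a) ∈ g.val :=
    ⟨p, mem_idealOfCofinals p _, Finset.mem_image_of_mem _ (hs.mem_toFinset.2 ha)⟩
  exact (eq_iff_eq_of_cmp_eq_cmp (hJ (F a).2 hpa)).1 rfl

end StrictMonoExtension

section TreeEmbedding

variable {α β : Type*} {T : Set (List α)} {φ : List α → List β}

/-- The map `φ` does not decrease distances along the branches of `T`. The inequality
`|e| - |d| ≤ |φ e| - |φ d|` is rearranged to avoid truncated subtraction. -/
def IsStretchingOn (T : Set (List α)) (φ : List α → List β) : Prop :=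
  ∀ ⦃d⦄, d ∈ T → ∀ ⦃e⦄, e ∈ T → d <+: e → e.length + (φ d).length ≤ (φ e).length + d.length

theorem IsStretchingOn.length_le (hs : IsStretchingOn T φ) (hT : [] ∈ T) (hφ : φ [] = [])
    {w : List α} (hw : w ∈ T) : w.length ≤ (φ w).length := by
  simpa [hφ] using hs hT hw List.nil_prefix

/-- The map `ε ↦ ε`, `a w ↦ f(a) t_a ψ_a(w)`, which acts on the first letter by `f` and on the
subtree of words starting with `a` by `ψ_a`. -/
def glue (f : α → β) (t : α → List β) (ψ : α → List α → List β) : List α → List β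
  | [] => []
  | a :: w => f a :: (t a ++ ψ a w)

/-- The subtree of `T` of words starting with `a`, with this letter removed and the root added. -/
def childTree (T : Set (List α)) (a : α) : Set (List α) :=
  insert [] {s | a :: s ∈ T}

theorem finite_childTree (hT : T.Finite) (a : α) : (childTree T a).Finite :=
  (hT.preimage (List.cons_injective.injOn)).insert []

theorem finite_heads (hT : T.Finite) : {a | ∃ s, a :: s ∈ T}.Finite :=
  ((hT.image List.head?).preimage (Option.some_injective α).injOn).subset
    fun a ⟨s, h⟩ => ⟨a :: s, h, rfl⟩

theorem isStretchingOn_childTree {a : α} {b : β} {t : List β} {ψ : List α → List β}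
    (hs : IsStretchingOn T φ) (hψ0 : ψ [] = [])
    (hψ : ∀ s, a :: s ∈ T → φ (a :: s) = b :: (t ++ ψ s))
    (hlen : ∀ s, a :: s ∈ T → s.length ≤ (ψ s).length) : IsStretchingOn (childTree T a) ψ := by
  rintro d (rfl | hd) e (rfl | he) hde
  · exact (Nat.add_comm _ _).le
  · simpa [hψ0] using hlen e he
  · simp [List.prefix_nil.1 hde, hψ0]
  · have hlen := hs hd he (List.cons_prefix_cons.2 ⟨rfl, hde⟩)
    simp only [hψ d hd, hψ e he, List.length_cons, List.length_append] at hlen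
    lia

variable [LinearOrder α] [LinearOrder β]

/-- A set of words containing the root `ε` and closed under longest common prefixes. -/
structure IsMeetTree (T : Set (List α)) : Prop where
  nil_mem : [] ∈ T
  lcp_mem : ∀ ⦃w⦄, w ∈ T → ∀ ⦃v⦄, v ∈ T → lcp w v ∈ T

/-- Embeddings of a tree of words, i.e. the structure-preserving maps of types: on `T` the map `φ`
preserves the root, longest common prefixes and the lexicographic order. Here `<` is Mathlib's
lexicographic order on lists, see `lexLe_iff_le`. -/
structure IsTreeEmbOn (T : Set (List α)) (φ : List α → List β) : Prop where
  map_nil : φ [] = []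
  map_lcp : ∀ ⦃w⦄, w ∈ T → ∀ ⦃v⦄, v ∈ T → φ (lcp w v) = lcp (φ w) (φ v)
  strictMonoOn : StrictMonoOn φ T

theorem IsTreeEmbOn.map_prefix (hφ : IsTreeEmbOn T φ) {w v : List α} (hw : w ∈ T) (hv : v ∈ T)
    (hwv : w <+: v) : φ w <+: φ v := by
  rw [← lcp_eq_left_iff_prefix, ← hφ.map_lcp hw hv, lcp_eq_left_iff_prefix.2 hwv]

theorem IsTreeEmbOn.prefix_iff (hT : IsMeetTree T) (hφ : IsTreeEmbOn T φ) {w v : List α}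
    (hw : w ∈ T) (hv : v ∈ T) : φ w <+: φ v ↔ w <+: v := by
  rw [← lcp_eq_left_iff_prefix, ← hφ.map_lcp hw hv,
    hφ.strictMonoOn.injOn.eq_iff (hT.lcp_mem hw hv) hw, lcp_eq_left_iff_prefix]

theorem isTreeEmbOn_univ_map {f : α → β} (hf : StrictMono f) :
    IsTreeEmbOn Set.univ (List.map f) where
  map_nil := rfl
  map_lcp w _ v _ := by
    induction w generalizing v with
    | nil => rfl
    | cons a w ih =>
      rcases v with _ | ⟨b, v⟩
      · simp
      rcases eq_or_ne a b with rfl | hab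
      · simp [ih]
      · simp [lcp_cons_cons_of_ne hab, lcp_cons_cons_of_ne (hf.injective.ne hab)]
  strictMonoOn _ _ _ _ h := List.map_lt (fun _ _ hab => hf hab) h

theorem isTreeEmbOn_univ_glue {f : α → β} (hf : StrictMono f) (t : α → List β)
    {ψ : α → List α → List β} (hψ : ∀ a, IsTreeEmbOn Set.univ (ψ a)) :
    IsTreeEmbOn Set.univ (glue f t ψ) where
  map_nil := rfl
  map_lcp w _ v _ := by
    rcases w with _ | ⟨a, w⟩
    · rfl
    rcases v with _ | ⟨b, v⟩
    · simp [glue]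
    rcases eq_or_ne a b with rfl | hab
    · simp only [glue, lcp_cons_cons_self, lcp_append_append,
        (hψ a).map_lcp (Set.mem_univ w) (Set.mem_univ v)]
    · simp only [glue, lcp_cons_cons_of_ne hab, lcp_cons_cons_of_ne (hf.injective.ne hab)]
  strictMonoOn w _ v _ h := by
    rcases v with _ | ⟨b, v⟩
    · exact absurd h (List.not_lt_nil w)
    rcases w with _ | ⟨a, w⟩
    · exact List.nil_lt_cons _ _
    rcases List.cons_lt_cons_iff.1 h with hab | ⟨rfl, hwv⟩
    · exact List.cons_lt_cons_iff.2 (Or.inl (hf hab))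
    · rw [glue, glue, List.cons_lt_cons_self, append_lt_append_left_iff]
      exact (hψ a).strictMonoOn (Set.mem_univ w) (Set.mem_univ v) hwv

theorem isMeetTree_childTree (hT : IsMeetTree T) (a : α) : IsMeetTree (childTree T a) where
  nil_mem := Set.mem_insert _ _
  lcp_mem := by
    rintro w (rfl | hw) v (rfl | hv)
    · exact Or.inl rfl
    · exact Or.inl rfl
    · exact Or.inl (lcp_nil w)
    · exact Or.inr (lcp_cons_cons_self a w v ▸ hT.lcp_mem hw hv :)

theorem isTreeEmbOn_childTree {a : α} {b : β} {t : List β} {ψ : List α → List β}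
    (hT : IsMeetTree T) (hφ : IsTreeEmbOn T φ) (hψ0 : ψ [] = [])
    (hψ : ∀ s, a :: s ∈ T → φ (a :: s) = b :: (t ++ ψ s))
    (hlen : ∀ s, a :: s ∈ T → s.length ≤ (ψ s).length) : IsTreeEmbOn (childTree T a) ψ where
  map_nil := hψ0
  map_lcp := by
    rintro w (rfl | hw) v (rfl | hv)
    · simp [hψ0]
    · simp [hψ0]
    · simp [hψ0]
    · have hlcp := hφ.map_lcp hw hv
      rw [lcp_cons_cons_self, hψ _ (lcp_cons_cons_self a w v ▸ hT.lcp_mem hw hv), hψ w hw, hψ v hv,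
        lcp_cons_cons_self, lcp_append_append] at hlcp
      exact List.append_cancel_left (List.cons.inj hlcp).2
  strictMonoOn := by
    rintro w (rfl | hw) v (rfl | hv) hwv
    · exact (lt_irrefl _ hwv).elim
    · rw [hψ0]
      have hv0 : 0 < v.length := List.length_pos_iff.2 hwv.ne'
      obtain ⟨c, u, hcu⟩ := List.exists_cons_of_length_pos (hv0.trans_le (hlen v hv))
      exact hcu ▸ List.nil_lt_cons c u
    · exact absurd hwv (List.not_lt_nil w)
    · have hlt := hφ.strictMonoOn hw hv (List.cons_lt_cons_self.2 hwv)
      rwa [hψ w hw, hψ v hv, List.cons_lt_cons_self, append_lt_append_left_iff] at hlt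

theorem IsTreeEmbOn.exists_common_prefix [Nonempty β] (hT : IsMeetTree T) (hφ : IsTreeEmbOn T φ)
    (hs : IsStretchingOn T φ) (a : α) :
    ∃ (b : β) (t : List β), ([a] ∈ T → φ [a] = b :: t) ∧
      ∀ s, a :: s ∈ T →
        b :: t <+: φ (a :: s) ∧ s.length + (b :: t).length ≤ (φ (a :: s)).length := by
  have hcons : ∀ {s}, a :: s ∈ T → ∃ b t, φ (a :: s) = b :: t := fun {s} h =>
    List.exists_cons_of_length_pos
      ((Nat.succ_pos s.length).trans_le (hs.length_le hT.nil_mem hφ.map_nil h))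
  by_cases ha : [a] ∈ T
  · obtain ⟨b, t, hbt⟩ := hcons ha
    refine ⟨b, t, fun _ => hbt, fun s h => ?_⟩
    have has : [a] <+: a :: s := List.cons_prefix_cons.2 ⟨rfl, List.nil_prefix⟩
    have hlen := hs ha h has
    simp only [hbt, List.length_cons, List.length_nil] at hlen ⊢
    exact ⟨hbt ▸ hφ.map_prefix ha h has, by lia⟩
  by_cases hne : ∃ r, a :: r ∈ T
  · obtain ⟨r, hr⟩ := hne
    obtain ⟨b, t, hbt⟩ := hcons hr
    refine ⟨b, [], fun h => absurd h ha, fun s h => ⟨?_, hs.length_le hT.nil_mem hφ.map_nil h⟩⟩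
    have hrs : a :: lcp r s ∈ T := lcp_cons_cons_self a r s ▸ hT.lcp_mem hr h
    obtain ⟨c, u, hcu⟩ := hcons hrs
    have hlcp : c :: u = lcp (b :: t) (φ (a :: s)) := by
      rw [← hcu, ← hbt, ← hφ.map_lcp hr h, lcp_cons_cons_self]
    obtain ⟨rfl, -⟩ := List.cons_prefix_cons.1 (hlcp ▸ lcp_prefix_left (b :: t) (φ (a :: s)))
    have hpre : c :: u <+: φ (a :: s) := hlcp ▸ lcp_prefix_right (c :: t) (φ (a :: s))
    exact (List.prefix_append [c] u).trans hpre
  · exact ⟨Classical.arbitrary β, [], fun h => absurd h ha, fun s h => absurd ⟨s, h⟩ hne⟩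

theorem IsTreeEmbOn.exists_childTree [Nonempty β] (hT : IsMeetTree T) (hφ : IsTreeEmbOn T φ)
    (hs : IsStretchingOn T φ) (a : α) :
    ∃ (b : β) (t : List β) (ψ : List α → List β),
      (∀ s, a :: s ∈ T → φ (a :: s) = b :: (t ++ ψ s)) ∧
      IsTreeEmbOn (childTree T a) ψ ∧ IsStretchingOn (childTree T a) ψ := by
  obtain ⟨b, t, ha, hbt⟩ := hφ.exists_common_prefix hT hs a
  -- `ψ` fixes the root of `childTree T a` even if `[a] ∉ T`, when `φ [a]` is arbitrary.
  let ψ (s : List α) : List β := if s = [] then [] else (φ (a :: s)).drop (b :: t).length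
  have hψ0 : ψ [] = [] := if_pos rfl
  have hψ : ∀ s, a :: s ∈ T → φ (a :: s) = b :: (t ++ ψ s) := by
    intro s h
    rcases eq_or_ne s [] with rfl | hs0
    · rw [hψ0, List.append_nil, ha h]
    · have hψs : ψ s = (φ (a :: s)).drop (b :: t).length := if_neg hs0
      rw [hψs]
      exact (List.prefix_iff_eq_append.1 (hbt s h).1).symm
  have hlen : ∀ s, a :: s ∈ T → s.length ≤ (ψ s).length := by
    intro s h
    have hlen := (hbt s h).2
    rw [hψ s h, ← List.cons_append, List.length_append] at hlen
    lia
  exact ⟨b, t, ψ, hψ, isTreeEmbOn_childTree hT hφ hψ0 hψ hlen,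
    isStretchingOn_childTree hs hψ0 hψ hlen⟩

theorem IsTreeEmbOn.strictMonoOn_heads (hφ : IsTreeEmbOn T φ) {b : α → β} {t : α → List β}
    {ψ : α → List α → List β} (hψ : ∀ a s, a :: s ∈ T → φ (a :: s) = b a :: (t a ++ ψ a s)) :
    StrictMonoOn b {a | ∃ s, a :: s ∈ T} := by
  rintro a ⟨s, hs⟩ a' ⟨s', hs'⟩ haa'
  have hlcp := hφ.map_lcp hs hs'
  have hlt := hφ.strictMonoOn hs hs' (List.cons_lt_cons_iff.2 (Or.inl haa'))
  rw [lcp_cons_cons_of_ne haa'.ne, hφ.map_nil] at hlcp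
  rw [hψ a s hs, hψ a' s' hs'] at hlcp hlt
  rcases List.cons_lt_cons_iff.1 hlt with hb | ⟨hb, -⟩
  · exact hb
  · rw [hb, lcp_cons_cons_self] at hlcp
    contradiction

theorem IsTreeEmbOn.exists_eqOn [Countable α] [DenselyOrdered β] [NoMinOrder β] [NoMaxOrder β]
    [Nonempty β] (hT : IsMeetTree T) (hfin : T.Finite) (hφ : IsTreeEmbOn T φ)
    (hs : IsStretchingOn T φ) : ∃ Φ, IsTreeEmbOn Set.univ Φ ∧ Set.EqOn Φ φ T := by
  obtain ⟨N, hN⟩ : ∃ N, ∀ w ∈ T, w.length ≤ N := by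
    obtain ⟨N, hN⟩ := (hfin.image List.length).bddAbove
    exact ⟨N, fun w hw => hN (Set.mem_image_of_mem _ hw)⟩
  induction N generalizing T φ with
  | zero =>
    obtain ⟨f, hf, -⟩ := exists_strictMono_eqOn (Set.finite_empty (α := α))
      (b := fun _ => Classical.arbitrary β) (by simp [StrictMonoOn])
    refine ⟨List.map f, isTreeEmbOn_univ_map hf, fun w hw => ?_⟩
    rw [List.length_eq_zero_iff.1 (Nat.le_zero.1 (hN w hw)), hφ.map_nil, List.map_nil]
  | succ N ih =>
    choose b t ψ hψ hψT hψs using fun a => hφ.exists_childTree hT hs a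
    have hΨ : ∀ a, ∃ Ψ, IsTreeEmbOn Set.univ Ψ ∧ Set.EqOn Ψ (ψ a) (childTree T a) := by
      refine fun a => ih (isMeetTree_childTree hT a) (finite_childTree hfin a) (hψT a) (hψs a) ?_
      rintro s (rfl | h)
      · exact Nat.zero_le N
      · exact Nat.succ_le_succ_iff.1 (hN _ h)
    choose Ψ hΨ hΨψ using hΨ
    obtain ⟨f, hf, hfb⟩ := exists_strictMono_eqOn (finite_heads hfin) (hφ.strictMonoOn_heads hψ)
    refine ⟨glue f t Ψ, isTreeEmbOn_univ_glue hf t hΨ, ?_⟩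
    rintro (_ | ⟨a, s⟩) h
    · exact hφ.map_nil.symm
    · rw [glue, hfb ⟨s, h⟩, hΨψ a (Or.inr h), hψ a s h]

end TreeEmbedding

section MaximalCommonAncestorTree

variable {C : List Word} {k : ℕ} {w v : Fin k → Word} {I J : Finset (Fin (k + C.length))}
  {φ h : Word → Word}

/-- The node of `MCAT C w` given by the longest common prefix of the entries with index in `I`.
As `listLCP [] = []`, the empty index set gives the root `ε`. -/
noncomputable def node (C : List Word) {k : ℕ} (w : Fin k → Word)
    (I : Finset (Fin (k + C.length))) : Word :=
  listLCP (I.toList.map (Fin.append w C.get))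

theorem node_empty : node C w ∅ = [] := by
  simp only [node, Finset.toList_empty, List.map_nil, listLCP]

theorem node_singleton (i : Fin (k + C.length)) : node C w {i} = Fin.append w C.get i := by
  simp only [node, Finset.toList_singleton, List.map_cons, List.map_nil, listLCP]

theorem prefix_node_iff {p : Word} (hI : I.Nonempty) :
    p <+: node C w I ↔ ∀ i ∈ I, p <+: Fin.append w C.get i := by
  have hne : I.toList.map (Fin.append w C.get) ≠ [] := by
    simpa only [ne_eq, List.map_eq_nil_iff, Finset.toList_eq_nil] using hI.ne_empty
  simp only [node, prefix_listLCP_iff hne, List.mem_map, Finset.mem_toList,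
    forall_exists_index, and_imp, forall_apply_eq_imp_iff₂]

theorem lcp_node (hI : I.Nonempty) (hJ : J.Nonempty) :
    lcp (node C w I) (node C w J) = node C w (I ∪ J) := by
  have hiff : ∀ p, p <+: lcp (node C w I) (node C w J) ↔ p <+: node C w (I ∪ J) := fun p => by
    rw [prefix_lcp_iff, prefix_node_iff hI, prefix_node_iff hJ, prefix_node_iff (hI.inl),
      Finset.forall_mem_union]
  exact antisymm (r := (· <+: ·)) ((hiff _).1 List.prefix_rfl) ((hiff _).2 List.prefix_rfl)

theorem MCAT_eq_range_node : MCAT C w = Set.range (node C w) := by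
  ext x
  constructor
  · rintro (rfl | ⟨I, -, rfl⟩)
    · exact ⟨∅, node_empty⟩
    · exact ⟨I, rfl⟩
  · rintro ⟨I, rfl⟩
    rcases I.eq_empty_or_nonempty with rfl | hI
    · exact Or.inl node_empty
    · exact Or.inr ⟨I, hI, rfl⟩

theorem finite_MCAT : (MCAT C w).Finite :=
  MCAT_eq_range_node ▸ Set.finite_range (node C w)

theorem isMeetTree_MCAT : IsMeetTree (MCAT C w) where
  nil_mem := Set.mem_insert _ _
  lcp_mem := by
    rintro x (rfl | ⟨I, hI, rfl⟩) y (rfl | ⟨J, hJ, rfl⟩)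
    · exact Or.inl (nil_lcp [])
    · exact Or.inl (nil_lcp _)
    · exact Or.inl (lcp_nil _)
    · exact Or.inr ⟨I ∪ J, hI.inl, lcp_node hI hJ⟩

theorem entry_mem_MCAT (i : Fin (k + C.length)) : Fin.append w C.get i ∈ MCAT C w :=
  Or.inr ⟨{i}, Finset.singleton_nonempty i, (node_singleton i).symm⟩

theorem mem_MCAT (i : Fin k) : w i ∈ MCAT C w := by
  simpa only [Fin.append_left] using entry_mem_MCAT (C := C) (w := w) (Fin.castAdd C.length i)

theorem constant_mem_MCAT {c : Word} (hc : c ∈ C) : c ∈ MCAT C w := by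
  obtain ⟨j, rfl⟩ := List.mem_iff_get.1 hc
  simpa only [Fin.append_right] using entry_mem_MCAT (C := C) (w := w) (Fin.natAdd k j)

theorem isInducedIso_of_map_node (hnode : ∀ I, h (node C w I) = node C v I)
    (hpre : ∀ I J, node C w I <+: node C w J ↔ node C v I <+: node C v J)
    (hle : ∀ I J, node C w I ≤ node C w J ↔ node C v I ≤ node C v J) :
    IsInducedIso C w v h := by
  have hentry : ∀ i, h (Fin.append w C.get i) = Fin.append v C.get i := fun i => by
    rw [← node_singleton, hnode, node_singleton]
  refine ⟨⟨?_, ?_, ?_⟩, ?_, fun c hc => ?_, fun i => ?_⟩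
  · rw [MCAT_eq_range_node, MCAT_eq_range_node]
    rintro _ ⟨I, rfl⟩
    exact ⟨I, (hnode I).symm⟩
  · rw [MCAT_eq_range_node]
    rintro _ ⟨I, rfl⟩ _ ⟨J, rfl⟩ hIJ
    rw [hnode, hnode] at hIJ
    exact le_antisymm ((hle I J).2 hIJ.le) ((hle J I).2 hIJ.ge)
  · rw [MCAT_eq_range_node, MCAT_eq_range_node]
    rintro _ ⟨I, rfl⟩
    exact ⟨_, ⟨I, rfl⟩, hnode I⟩
  · rw [MCAT_eq_range_node]
    rintro _ ⟨I, rfl⟩ _ ⟨J, rfl⟩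
    rw [hnode, hnode, lexLe_iff_le, lexLe_iff_le]
    exact ⟨hpre I J, hle I J⟩
  · obtain ⟨j, rfl⟩ := List.mem_iff_get.1 hc
    simpa only [Fin.append_right] using hentry (Fin.natAdd k j)
  · simpa only [Fin.append_left] using hentry (Fin.castAdd C.length i)

theorem IsTreeEmbOn.map_listLCP (hφ : IsTreeEmbOn Set.univ φ) (l : List Word) :
    φ (listLCP l) = listLCP (l.map φ) := by
  induction l with
  | nil => exact hφ.map_nil
  | cons x l ih =>
    rcases eq_or_ne l [] with rfl | hl
    · rfl
    · rw [listLCP_cons x hl, hφ.map_lcp (Set.mem_univ _) (Set.mem_univ _), ih, List.map_cons,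
        listLCP_cons _ (List.map_eq_nil_iff.not.2 hl)]

theorem IsTreeEmbOn.isInducedIso (hφ : IsTreeEmbOn Set.univ φ) (hφC : ∀ c ∈ C, φ c = c)
    (hφw : ∀ i, φ (w i) = v i) : IsInducedIso C w v φ := by
  have hentry : ∀ i, φ (Fin.append w C.get i) = Fin.append v C.get i := by
    refine Fin.addCases (fun i => ?_) fun j => ?_
    · simp only [Fin.append_left, hφw]
    · simp only [Fin.append_right, hφC _ (C.get_mem j)]
  have hnode : ∀ I, φ (node C w I) = node C v I := fun I => by
    rw [node, hφ.map_listLCP, List.map_map]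
    exact congrArg (fun g => listLCP (I.toList.map g)) (funext hentry)
  refine isInducedIso_of_map_node hnode (fun I J => ?_) fun I J => ?_
  · rw [← hnode, ← hnode,
      hφ.prefix_iff ⟨Set.mem_univ _, fun _ _ _ _ => Set.mem_univ _⟩ (Set.mem_univ _)
        (Set.mem_univ _)]
  · rw [← hnode, ← hnode, hφ.strictMonoOn.le_iff_le (Set.mem_univ _) (Set.mem_univ _)]

theorem IsInducedIso.isTreeEmbOn (hh : IsInducedIso C w v h) : IsTreeEmbOn (MCAT C w) h := by
  obtain ⟨⟨hmaps, hinj, hsurj⟩, hiff, -⟩ := hh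
  have hpre : ∀ {x}, x ∈ MCAT C w → ∀ {y}, y ∈ MCAT C w → (x <+: y ↔ h x <+: h y) :=
    fun hx _ hy => (hiff _ hx _ hy).1
  refine ⟨?_, fun x hx y hy => ?_, fun x hx y hy hxy => ?_⟩
  · obtain ⟨x, hx, hx0⟩ := hsurj isMeetTree_MCAT.nil_mem
    exact List.prefix_nil.1 (hx0 ▸ (hpre isMeetTree_MCAT.nil_mem hx).1 List.nil_prefix)
  · have hxy := isMeetTree_MCAT.lcp_mem hx hy
    obtain ⟨z, hz, hzxy⟩ := hsurj (isMeetTree_MCAT.lcp_mem (hmaps hx) (hmaps hy))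
    have hzx : z <+: x := (hpre hz hx).2 (hzxy ▸ lcp_prefix_left _ _)
    have hzy : z <+: y := (hpre hz hy).2 (hzxy ▸ lcp_prefix_right _ _)
    refine antisymm (r := (· <+: ·)) (prefix_lcp_iff.2 ⟨?_, ?_⟩) ?_
    · exact (hpre hxy hx).1 (lcp_prefix_left x y)
    · exact (hpre hxy hy).1 (lcp_prefix_right x y)
    · exact hzxy ▸ (hpre hz hxy).1 (prefix_lcp_iff.2 ⟨hzx, hzy⟩)
  · have hle := (hiff x hx y hy).2.1 (lexLe_iff_le.2 hxy.le)
    exact (lexLe_iff_le.1 hle).lt_of_ne (hinj.ne hx hy hxy.ne)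

theorem StretchCond.isStretchingOn (hh : StretchCond C w h) : IsStretchingOn (MCAT C w) h := by
  intro d hd e he hde
  rcases eq_or_ne d e with rfl | hne
  · exact (Nat.add_comm _ _).le
  · exact hh d hd e he hde hne

theorem Stretch.exists_isTreeEmbOn (hwv : Stretch C w v) :
    ∃ φ, IsTreeEmbOn Set.univ φ ∧ (∀ c ∈ C, φ c = c) ∧ ∀ i, φ (w i) = v i := by
  obtain ⟨h, hh, hs⟩ := hwv
  obtain ⟨φ, hφ, hφh⟩ := hh.isTreeEmbOn.exists_eqOn isMeetTree_MCAT finite_MCAT hs.isStretchingOn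
  obtain ⟨-, -, hC, hw⟩ := hh
  exact ⟨φ, hφ, fun c hc => (hφh (constant_mem_MCAT hc)).trans (hC c hc),
    fun i => (hφh (mem_MCAT i)).trans (hw i)⟩

end MaximalCommonAncestorTree

section WellQuasiOrder

variable {C : List Word} {k : ℕ} {w v : Fin k → Word}

/-- The prefix order and the lexicographic order on the nodes of `MCAT C w`, read off on index
sets; the code determines the type of `w` over `C`. -/
def typeCode (C : List Word) {k : ℕ} (w : Fin k → Word)
    (I J : Finset (Fin (k + C.length))) : Prop × Prop :=
  (node C w I <+: node C w J, node C w I ≤ node C w J)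

/-- The differences of length of the nodes of `MCAT C w`, which are compared by `≼*`. They are
truncated to `0` if the second node is shorter, as only the pairs with `node C w I <+: node C w J`
matter. -/
noncomputable def gapCode (C : List Word) {k : ℕ} (w : Fin k → Word)
    (I J : Finset (Fin (k + C.length))) : ℕ :=
  (node C w J).length - (node C w I).length

theorem stretch_of_typeCode_eq_of_gapCode_le (htype : typeCode C w = typeCode C v)
    (hgap : gapCode C w ≤ gapCode C v) : Stretch C w v := by
  have hpre : ∀ I J, node C w I <+: node C w J ↔ node C v I <+: node C v J := fun I J =>
    iff_of_eq (congrArg Prod.fst (congrFun₂ htype I J))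
  have hle : ∀ I J, node C w I ≤ node C w J ↔ node C v I ≤ node C v J := fun I J =>
    iff_of_eq (congrArg Prod.snd (congrFun₂ htype I J))
  have hfactors : (node C v).FactorsThrough (node C w) := fun I J hIJ =>
    le_antisymm ((hle I J).1 hIJ.le) ((hle J I).1 hIJ.ge)
  have hnode : ∀ I, Function.extend (node C w) (node C v) id (node C w I) = node C v I :=
    hfactors.extend_apply id
  refine ⟨_, isInducedIso_of_map_node hnode hpre hle, ?_⟩
  rw [StretchCond, MCAT_eq_range_node]
  rintro _ ⟨I, rfl⟩ _ ⟨J, rfl⟩ hIJ -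
  rw [hnode, hnode]
  have hlen : (node C w J).length - (node C w I).length ≤
    (node C v J).length - (node C v I).length := hgap I J
  have hlen_v := ((hpre I J).1 hIJ).length_le
  lia

theorem wellQuasiOrdered_stretch (C : List Word) (k : ℕ) :
    WellQuasiOrdered (Stretch C (k := k)) := by
  intro w
  obtain ⟨i, j, hij, htype, hgap⟩ := ((Finite.wellQuasiOrdered (· = ·)).prod wellQuasiOrdered_le)
    fun m => (typeCode C (w m), gapCode C (w m))
  exact ⟨i, j, hij, stretch_of_typeCode_eq_of_gapCode_le htype hgap⟩

end WellQuasiOrder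

section Pumping

variable {X : Type*} {R : X → X → Prop}

theorem exists_infinite_run_of_loop {f : X → X} (hf : ∀ ⦃x y⦄, R x y → R (f x) (f y)) {N : ℕ}
    (hN : 0 < N) {r : ℕ → X} (hr : ∀ i < N, R (r i) (r (i + 1))) (hrN : r N = f (r 0)) :
    ∃ σ : ℕ → X, (∀ i, R (σ i) (σ (i + 1))) ∧ ∀ m, σ (N * m) = f^[m] (r 0) := by
  have hiter : ∀ m ⦃x y⦄, R x y → R (f^[m] x) (f^[m] y) := fun m => by
    induction m with
    | zero => exact fun _ _ => id
    | succ _ ih => exact fun _ _ hxy => ih (hf hxy)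
  refine ⟨fun j => f^[j / N] (r (j % N)), fun j => ?_, fun m => ?_⟩
  · have hlt := Nat.mod_lt j hN
    have hstep := hiter (j / N) (hr (j % N) hlt)
    have hdiv := Nat.mod_add_div j N
    rcases (Nat.succ_le_of_lt hlt).lt_or_eq with h | h
    · have hj : (j + 1) / N = j / N ∧ (j + 1) % N = j % N + 1 :=
        (Nat.div_mod_unique hN).2 ⟨by lia, h⟩
      simpa only [hj.1, hj.2] using hstep
    · have hj : (j + 1) / N = j / N + 1 ∧ (j + 1) % N = 0 :=
        (Nat.div_mod_unique hN).2 ⟨by rw [mul_add]; lia, hN⟩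
      rw [show j % N + 1 = N from h, hrN, ← Function.iterate_succ_apply] at hstep
      simpa only [hj.1, hj.2] using hstep
  · simp only [Nat.mul_div_cancel_left m hN, Nat.mul_mod_right]

theorem exists_infinite_run_of_reflTransGen {x y : X} (hxy : Relation.ReflTransGen R x y)
    {σ : ℕ → X} (hσ : ∀ i, R (σ i) (σ (i + 1))) (hσy : σ 0 = y) :
    ∃ ρ : ℕ → X, (∀ i, R (ρ i) (ρ (i + 1))) ∧ ρ 0 = x ∧ ∃ N, ∀ i, ρ (N + i) = σ i := by
  induction hxy using Relation.ReflTransGen.head_induction_on with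
  | refl => exact ⟨σ, hσ, hσy, 0, fun i => by rw [Nat.zero_add]⟩
  | @head x z hxz _ ih =>
    obtain ⟨ρ, hρ, rfl, N, hN⟩ := ih
    refine ⟨fun i => i.casesOn x ρ, fun i => ?_, rfl, N + 1, fun i => ?_⟩
    · cases i with
      | zero => exact hxz
      | succ i => exact hρ i
    · rw [Nat.succ_add_eq_add_succ]
      exact hN i

variable {C : List Word} {Q : Type*} {n : ℕ} {N : ℕ}
  {step : (Q × (Fin n → Word)) → (Q × (Fin n → Word)) → Prop}
  {r : Fin (N + 1) → Q × (Fin n → Word)}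

theorem IsFinRun.reflTransGen (hr : IsFinRun step r) (i : Fin (N + 1)) :
    Relation.ReflTransGen step (r 0) (r i) :=
  Fin.induction .refl (fun i hi => hi.tail (hr i)) i

theorem TypeInvariant.step_map (hstep : TypeInvariant C step) {φ : Word → Word}
    (hφ : IsTreeEmbOn Set.univ φ) (hφC : ∀ c ∈ C, φ c = c) {c d : Q × (Fin n → Word)}
    (hcd : step c d) : step (Prod.map id (φ ∘ ·) c) (Prod.map id (φ ∘ ·) d) :=
  hstep _ _ _ _ _ _ hcd ⟨φ, hφ.isInducedIso hφC
    (Fin.addCases (fun i => by simp only [Fin.append_left, Function.comp_apply])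
      fun i => by simp only [Fin.append_right, Function.comp_apply])⟩

theorem exists_infRun_of_stretching_loop (hstep : TypeInvariant C step) (hN : 0 < N)
    (hr : IsFinRun step r) (hle : ConfigLe C (r 0) (r (Fin.last N))) :
    ∃ σ, IsInfRun step σ ∧ σ 0 = r 0 ∧ ∀ k, ∃ j ≥ k, (σ j).1 = (r 0).1 := by
  obtain ⟨φ, hφ, hφC, hφr⟩ := hle.2.exists_isTreeEmbOn
  let f : Q × (Fin n → Word) → Q × (Fin n → Word) := Prod.map id (φ ∘ ·)
  have hrN : r (Fin.last N) = f (r 0) := Prod.ext hle.1.symm (funext fun i => (hφr i).symm)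
  have hr' : ∀ i < N, step (r (Fin.ofNat (N + 1) i)) (r (Fin.ofNat (N + 1) (i + 1))) := by
    intro i hi
    simp only [Fin.ofNat, Nat.mod_eq_of_lt (Nat.lt_succ_of_lt hi),
      Nat.mod_eq_of_lt (Nat.succ_lt_succ hi)]
    exact hr ⟨i, hi⟩
  have hlast : Fin.ofNat (N + 1) N = Fin.last N := Fin.ext (Nat.mod_eq_of_lt N.lt_succ_self)
  obtain ⟨σ, hσ, hσN⟩ := exists_infinite_run_of_loop (r := fun i => r (Fin.ofNat (N + 1) i))
    (fun _ _ => hstep.step_map hφ hφC) hN hr' (hlast ▸ hrN)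
  refine ⟨σ, hσ, hσN 0, fun k => ⟨N * k, Nat.le_mul_of_pos_left k hN, ?_⟩⟩
  rw [hσN, Prod.map_iterate, Function.iterate_id]
  rfl

end Pumping

theorem stmt7_general (C : List Word) {Q : Type*} {n : ℕ}
    (step : (Q × (Fin n → Word)) → (Q × (Fin n → Word)) → Prop)
    (hstep : TypeInvariant C step) (I F : Set Q) :
    (∃ ρ : ℕ → Q × (Fin n → Word), IsInfRun step ρ ∧ (ρ 0).1 ∈ I ∧
        ∃ f ∈ F, ∀ k : ℕ, ∃ j ≥ k, (ρ j).1 = f) ↔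
    (∃ (N₁ : ℕ) (r₁ : Fin (N₁ + 1) → Q × (Fin n → Word))
       (N₂ : ℕ) (r₂ : Fin (N₂ + 1) → Q × (Fin n → Word)),
        IsFinRun step r₁ ∧ (r₁ 0).1 ∈ I ∧ (r₁ (Fin.last N₁)).1 ∈ F ∧
        0 < N₂ ∧ IsFinRun step r₂ ∧ r₂ 0 = r₁ (Fin.last N₁) ∧
        ConfigLe C (r₂ 0) (r₂ (Fin.last N₂))) := by
  constructor
  · rintro ⟨ρ, hρ, hρI, f, hf, hinf⟩
    obtain ⟨s, hs, hsf⟩ := Filter.extraction_of_frequently_atTop (Filter.frequently_atTop.2 hinf)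
    obtain ⟨i, j, hij, hstretch⟩ := wellQuasiOrdered_stretch C n fun m => (ρ (s m)).2
    obtain ⟨N, hN⟩ := Nat.exists_eq_add_of_lt (hs hij)
    refine ⟨s i, fun l => ρ l, N + 1, fun l => ρ (s i + l), fun l => hρ l, hρI, ?_, N.succ_pos,
      fun l => hρ (s i + l), rfl, ?_, ?_⟩
    · exact (hsf i).symm ▸ hf
    · exact (hsf i).trans (hN ▸ hsf j).symm
    · simp only [hN] at hstretch
      exact hstretch
  · rintro ⟨N₁, r₁, N₂, r₂, h₁, hI, hF, hN₂, h₂, h₁₂, hle⟩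
    obtain ⟨σ, hσ, hσ0, hinf⟩ := exists_infRun_of_stretching_loop hstep hN₂ h₂ hle
    obtain ⟨ρ, hρ, hρ0, N, hN⟩ := exists_infinite_run_of_reflTransGen
      (h₁.reflTransGen (Fin.last N₁)) hσ (hσ0.trans h₁₂)
    refine ⟨ρ, hρ, hρ0 ▸ hI, _, h₁₂ ▸ hF, fun k => ?_⟩
    obtain ⟨j, hkj, hj⟩ := hinf k
    exact ⟨N + j, le_add_left hkj, (congrArg Prod.fst (hN j)).trans hj⟩

/-- A type-invariant transition system has an accepting run if and only if there is a
finite run from an initial configuration to a configuration `c` with final state together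
with a stretching loop starting in `c`. -/
theorem stmt7 (C : List Word) (hC : ∀ c ∈ C, ∀ c' : Word, c' <+: c → c' ∈ C)
    {Q : Type*} [Fintype Q] {n : ℕ}
    (step : (Q × (Fin n → Word)) → (Q × (Fin n → Word)) → Prop)
    (hstep : TypeInvariant C step) (I F : Set Q) :
    (∃ ρ : ℕ → Q × (Fin n → Word), IsInfRun step ρ ∧ (ρ 0).1 ∈ I ∧
        ∃ f ∈ F, ∀ k : ℕ, ∃ j ≥ k, (ρ j).1 = f) ↔
    (∃ (N₁ : ℕ) (r₁ : Fin (N₁ + 1) → Q × (Fin n → Word))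
       (N₂ : ℕ) (r₂ : Fin (N₂ + 1) → Q × (Fin n → Word)),
        IsFinRun step r₁ ∧ (r₁ 0).1 ∈ I ∧ (r₁ (Fin.last N₁)).1 ∈ F ∧
        0 < N₂ ∧ IsFinRun step r₂ ∧ r₂ 0 = r₁ (Fin.last N₁) ∧
        ConfigLe C (r₂ 0) (r₂ (Fin.last N₂))) :=
  stmt7_general C step hstep I F

end CLTL
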